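/- If a table t with n+1 columns is (1,n,n+1)-safe, then for every row b0 of t and every vector b' differing from b0 in exactly one coordinate, b' also occurs as a row of t, and moreover b' occurs with the same multiplicity as b0. -/

import Mathlib

/-- XOR-sum of a Boolean row (entries in `ZMod 2`). -/
def xorSum {N : ℕ} (r : Fin N → ZMod 2) : ZMod 2 := ∑ i, r i

/-- Reduction: keep only the rows with bit `b` at column `j`. -/
def reduce {N : ℕ} (j : Fin N) (b : ZMod 2) (t : Multiset (Fin N → ZMod 2)) :
    Multiset (Fin N → ZMod 2) :=
  t.filter (fun r => r j = b)

/-- `(1,m,N)`-safety: after any `m` reductions, equally many rows XOR-sum to 0 and to 1. -/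
def safeB {N : ℕ} : ℕ → Multiset (Fin N → ZMod 2) → Prop
  | 0, t => (t.filter (fun r => xorSum r = 0)).card = (t.filter (fun r => xorSum r = 1)).card
  | m + 1, t => ∀ (j : Fin N) (c : ZMod 2), safeB m (reduce j c t)

/-- Index of the `j`-th entry of the `i`-th block of size `ℓ`. -/
def blockIdx {N x ℓ : ℕ} (hN : x * ℓ ≤ N) (i : Fin x) (j : Fin ℓ) : Fin N :=
  ⟨i.1 * ℓ + j.1, by
    have h1 : i.1 * ℓ + j.1 < (i.1 + 1) * ℓ := by
      calc i.1 * ℓ + j.1 < i.1 * ℓ + ℓ := Nat.add_lt_add_left j.2 _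
        _ = (i.1 + 1) * ℓ := (Nat.succ_mul i.1 ℓ).symm
    exact lt_of_lt_of_le h1 (le_trans (Nat.mul_le_mul i.2 (Nat.le_refl ℓ)) hN)⟩

/-- XOR-sum of the `i`-th block of `ℓ` entries of a row. -/
def blockSum {N x ℓ : ℕ} (hN : x * ℓ ≤ N) (i : Fin x) (r : Fin N → ZMod 2) : ZMod 2 :=
  ∑ j : Fin ℓ, r (blockIdx hN i j)

/-- The `b`-restriction of `t` w.r.t. block size `ℓ`. -/
def restrict {N x ℓ : ℕ} (hN : x * ℓ ≤ N) (b : Fin x → ZMod 2)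
    (t : Multiset (Fin N → ZMod 2)) : Multiset (Fin N → ZMod 2) :=
  t.filter (fun r => ∀ i, blockSum hN i r = b i)

/-- `(x,m,ℓ)`-safety. -/
def safe {N x ℓ : ℕ} (hN : x * ℓ ≤ N) : ℕ → Multiset (Fin N → ZMod 2) → Prop
  | 0, t => ∀ b b' : Fin x → ZMod 2, (restrict hN b t).card = (restrict hN b' t).card
  | m + 1, t => ∀ (j : Fin N) (c : ZMod 2), safe hN m (reduce j c t)

/-- `Reduces m s t`: `t` is obtained from `s` by `m` reductions. -/
inductive Reduces {N : ℕ} : ℕ → Multiset (Fin N → ZMod 2) → Multiset (Fin N → ZMod 2) → Prop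
  | refl (t) : Reduces 0 t t
  | step {m t t'} (j : Fin N) (b : ZMod 2) : Reduces m t t' → Reduces (m + 1) t (reduce j b t')

/-- Join of two tables matching the last `L` columns of the first table
with the first `L` columns of the second. -/
def join {c1 c2 L : ℕ} (h1 : L ≤ c1) (h2 : L ≤ c2)
    (t1 : Multiset (Fin c1 → ZMod 2)) (t2 : Multiset (Fin c2 → ZMod 2)) :
    Multiset (Fin (c1 + c2 - L) → ZMod 2) :=
  ∑ v : Fin (c1 + c2 - L) → ZMod 2,
    Multiset.replicate
      ((t1.count (fun i : Fin c1 => v ⟨i.1, by have := i.2; omega⟩)) *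
       (t2.count (fun i : Fin c2 => v ⟨c1 - L + i.1, by have := i.2; omega⟩))) v

/-- Full join of two tables on all columns. -/
def fullJoin {N : ℕ} (t1 t2 : Multiset (Fin N → ZMod 2)) : Multiset (Fin N → ZMod 2) :=
  ∑ v : Fin N → ZMod 2, Multiset.replicate (t1.count v * t2.count v) v

/-- Projection to the last `m` columns. -/
def lastProj {N m : ℕ} (h : m ≤ N) (r : Fin N → ZMod 2) : Fin m → ZMod 2 :=
  fun j => r ⟨N - m + j.1, by have := j.2; omega⟩

/-- XOR-sum of the last `m` columns. -/
def lastSum {N m : ℕ} (h : m ≤ N) (r : Fin N → ZMod 2) : ZMod 2 :=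
  xorSum (lastProj h r)

/-- Delete column `j` of an (n+1)-column row. -/
def deleteCol {n : ℕ} (j : Fin (n + 1)) (r : Fin (n + 1) → ZMod 2) : Fin n → ZMod 2 :=
  fun i => r (j.succAbove i)

theorem safeB_filter_aux {N : ℕ} (b : Fin N → ZMod 2) (S : Finset (Fin N)) :
    ∀ t : Multiset (Fin N → ZMod 2), safeB S.card t →
      safeB 0 (t.filter (fun r => ∀ j ∈ S, r j = b j)) := by
  classical
  induction S using Finset.induction_on with
  | empty => intro t h; simpa using h
  | insert a S ha ih =>
    intro t h
    rw [Finset.card_insert_of_notMem ha] at h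
    have h1 := ih _ (h a (b a))
    have h2 : (reduce a (b a) t).filter (fun r => ∀ j ∈ S, r j = b j)
        = t.filter (fun r => ∀ j ∈ insert a S, r j = b j) := by
      unfold reduce
      rw [Multiset.filter_filter]
      apply Multiset.filter_congr
      intro r _
      simp [Finset.forall_mem_insert, and_comm]
    rw [h2] at h1
    exact h1

/-- if an (n+1)-column table is (1,n,n+1)-safe, then any vector
differing from a row in exactly one coordinate also occurs, with the same
multiplicity. -/
theorem safe_neighbor_count (n : ℕ) (t : Multiset (Fin (n + 1) → ZMod 2))
    (hsafe : safeB n t) (b0 b' : Fin (n + 1) → ZMod 2) (hb0 : b0 ∈ t)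
    (i : Fin (n + 1)) (hne : b' i ≠ b0 i) (heq : ∀ j, j ≠ i → b' j = b0 j) :
    b' ∈ t ∧ t.count b' = t.count b0 := by
  classical
  have key := safeB_filter_aux b0 (Finset.univ.erase i) t (by simpa using hsafe)
  have hz : ∀ x y : ZMod 2, x ≠ y → x = y + 1 := by decide
  have hx : ∀ r : Fin (n + 1) → ZMod 2, xorSum r = r i + ∑ j ∈ Finset.univ.erase i, r j := by
    intro r
    exact (Finset.add_sum_erase _ _ (Finset.mem_univ i)).symm
  have cnt : ∀ v : Fin (n + 1) → ZMod 2, (∀ j, j ≠ i → v j = b0 j) →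
      ((t.filter (fun r => ∀ j ∈ Finset.univ.erase i, r j = b0 j)).filter
        (fun r => xorSum r = xorSum v)).card = t.count v := by
    intro v hv
    rw [Multiset.filter_filter, Multiset.count, Multiset.countP_eq_card_filter]
    congr 1
    apply Multiset.filter_congr
    intro r _
    constructor
    · rintro ⟨h1, h2⟩
      have h3 : ∀ j ∈ Finset.univ.erase i, r j = v j := fun j hj => by
        rw [h2 j hj, hv j (Finset.ne_of_mem_erase hj)]
      rw [hx, hx, Finset.sum_congr rfl h3] at h1
      have h4 := add_right_cancel h1
      funext j
      by_cases hj : j = i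
      · rw [hj, h4]
      · exact (h3 j (by simp [hj])).symm
    · rintro rfl
      exact ⟨rfl, fun j hj => hv j (Finset.ne_of_mem_erase hj)⟩
  have c0 := cnt b0 (fun _ _ => rfl)
  have c1 := cnt b' heq
  have hs : xorSum b' = xorSum b0 + 1 := by
    rw [hx, hx, hz _ _ hne,
      Finset.sum_congr rfl (fun j hj => heq j (Finset.ne_of_mem_erase hj))]
    ring
  have hcount : t.count b' = t.count b0 := by
    have h01 : ∀ x : ZMod 2, x = 0 ∨ x = 1 := by decide
    rw [← c0, ← c1, hs]
    unfold safeB at key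
    rcases h01 (xorSum b0) with h | h
    · rw [h, zero_add]; exact key.symm
    · rw [h, show (1 + 1 : ZMod 2) = 0 by decide]; exact key
  refine ⟨?_, hcount⟩
  rw [← Multiset.count_pos, hcount]
  exact Multiset.count_pos.2 hb0
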